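/- Let a : ℝⁿ → ℝ be smooth, ℤⁿ-periodic and strictly positive, and let b : ℝⁿ → ℝ be smooth and ℤⁿ-periodic. Then ∫ ( |Db|² + b² Δa / a ) dx = ∫ a² |D(b/a)|² dx. -/

import Mathlib

/-!
Pointwise, `|Db|² + b² Δa / a` and `a² |D(b/a)|²` differ by the divergence of the field
`(b² / a) Da`: expanding the square gives `a² |D(b/a)|² = |Db|² - 2 (b/a) Db·Da + (b²/a²) |Da|²`,
while `div ((b²/a) Da) = 2 (b/a) Db·Da - (b²/a²) |Da|² + (b²/a) Δa` (`pointwise_identity`).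
The field is smooth and periodic, so its divergence integrates to zero over the unit cube: in the
divergence theorem, opposite faces cancel by periodicity (`integral_divergence_eq_zero`).
-/

open MeasureTheory

noncomputable section

/-- `ℝⁿ` with the Euclidean inner product. -/
abbrev En (n : ℕ) := EuclideanSpace ℝ (Fin n)

/-- The integer vector `k` viewed as a point of `ℝⁿ`. -/
def intVec {n : ℕ} (k : Fin n → ℤ) : En n :=
  (EuclideanSpace.equiv (Fin n) ℝ).symm (fun i => (k i : ℝ))

/-- `ℤⁿ`-periodicity for scalar functions on `ℝⁿ`. -/
def IsPeriodic {n : ℕ} (f : En n → ℝ) : Prop :=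
  ∀ (x : En n) (k : Fin n → ℤ), f (x + intVec k) = f x

/-- `ℤⁿ`-periodicity for vector fields on `ℝⁿ`. -/
def IsPeriodicV {n : ℕ} (F : En n → En n) : Prop :=
  ∀ (x : En n) (k : Fin n → ℤ), F (x + intVec k) = F x

/-- The unit cube `[0,1]ⁿ`, the fundamental domain of the torus. -/
def unitCube (n : ℕ) : Set (En n) := {x | ∀ i, x i ∈ Set.Icc (0:ℝ) 1}

/-- Euclidean dot product. -/
def dot {n : ℕ} (x y : En n) : ℝ := ∑ i, x i * y i

/-- Partial derivative in the `i`-th coordinate direction. -/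
def pd {n : ℕ} (i : Fin n) (f : En n → ℝ) (x : En n) : ℝ :=
  fderiv ℝ f x (EuclideanSpace.single i 1)

/-- The Laplacian of a scalar function. -/
def lap {n : ℕ} (f : En n → ℝ) (x : En n) : ℝ :=
  ∑ i, pd i (fun y => pd i f y) x

/-- The divergence of a vector field. -/
def dvg {n : ℕ} (F : En n → En n) (x : En n) : ℝ :=
  ∑ i, fderiv ℝ (fun y => F y i) x (EuclideanSpace.single i 1)

lemma gradient_apply_eq_pd {n : ℕ} (f : En n → ℝ) (x : En n) (i : Fin n) :
    gradient f x i = pd i f x := by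
  have h : inner ℝ (gradient f x) (EuclideanSpace.single i (1 : ℝ)) = pd i f x := by
    rw [gradient, InnerProductSpace.toDual_symm_apply, pd]
  rw [← h, EuclideanSpace.inner_single_right]
  simp

lemma contDiff_pd {n : ℕ} {f : En n → ℝ} (hf : ContDiff ℝ (⊤ : ℕ∞) f) (i : Fin n) :
    ContDiff ℝ (⊤ : ℕ∞) (pd i f) := by
  have h : ContDiff ℝ (⊤ : ℕ∞) (fderiv ℝ f) := hf.fderiv_right (by simp)
  exact h.clm_apply contDiff_const

lemma isPeriodic_pd {n : ℕ} {f : En n → ℝ} (hf : IsPeriodic f) (i : Fin n) :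
    IsPeriodic (pd i f) := by
  intro x k
  have h : (fun y => f (y + intVec k)) = f := funext fun y => hf y k
  have h2 := fderiv_comp_add_right (𝕜 := ℝ) (f := f) (x := x) (intVec k)
  rw [h] at h2
  rw [pd, pd, h2]

lemma unitCube_eq_preimage (n : ℕ) :
    unitCube n = WithLp.ofLp ⁻¹' (Set.Icc (0 : Fin n → ℝ) 1) := by
  ext x
  simp only [unitCube, Set.mem_ofPred_eq, Set.mem_preimage, Set.mem_Icc, Pi.le_def,
    Pi.zero_apply, Pi.one_apply, forall_and]

lemma setIntegral_unitCube {n : ℕ} (g : En n → ℝ) :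
    ∫ x in unitCube n, g x = ∫ y in Set.Icc (0 : Fin n → ℝ) 1, g (WithLp.toLp 2 y) := by
  rw [unitCube_eq_preimage]
  exact (PiLp.volume_preserving_ofLp (Fin n)).setIntegral_preimage_emb
    (MeasurableEquiv.toLp 2 (Fin n → ℝ)).symm.measurableEmbedding
    (fun y => g (WithLp.toLp 2 y)) (Set.Icc 0 1)

lemma isCompact_unitCube (n : ℕ) : IsCompact (unitCube n) := by
  rw [unitCube_eq_preimage]
  exact (EuclideanSpace.equiv (Fin n) ℝ).toHomeomorph.isClosedEmbedding.isCompact_preimage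
    isCompact_Icc

/-- The divergence of a smooth periodic field integrates to zero over the unit cube. -/
lemma integral_divergence_eq_zero {n : ℕ} (F : Fin n → En n → ℝ)
    (hF : ∀ i, ContDiff ℝ (⊤ : ℕ∞) (F i)) (hper : ∀ i, IsPeriodic (F i)) :
    ∫ x in unitCube n, ∑ i, pd i (F i) x = 0 := by
  rw [setIntegral_unitCube]
  -- The divergence theorem is stated on `Fin (m + 1) → ℝ`; in dimension zero the sum is empty.
  cases n with
  | zero => simp
  | succ m =>
    let L := (EuclideanSpace.equiv (Fin (m + 1)) ℝ).symm
    have hL : ∀ y, WithLp.toLp 2 y = L y := fun _ => rfl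
    have hcont : Continuous fun y : Fin (m + 1) → ℝ => ∑ i, pd i (F i) (L y) :=
      continuous_finsetSum _ fun i _ => (contDiff_pd (hF i) i).continuous.comp L.continuous
    have key := integral_divergence_of_hasFDerivAt_off_countable'
      (0 : Fin (m + 1) → ℝ) 1 zero_le_one (fun i y => F i (L y))
      (fun i y => (fderiv ℝ (F i) (L y)).comp (L : (Fin (m + 1) → ℝ) →L[ℝ] En (m + 1)))
      ∅ Set.countable_empty
      (fun i => ((hF i).continuous.comp L.continuous).continuousOn)
      (fun y _ i => ((hF i).differentiable (by simp) (L y)).hasFDerivAt.comp y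
        L.hasFDerivAt)
      (hcont.continuousOn.integrableOn_compact isCompact_Icc)
    refine key.trans (Finset.sum_eq_zero fun i _ => ?_)
    rw [sub_eq_zero]
    congr 1
    funext y
    -- The front face is the back face translated by the `i`-th integer basis vector.
    have hface : L (i.insertNth ((1 : Fin (m + 1) → ℝ) i) y)
        = L (i.insertNth ((0 : Fin (m + 1) → ℝ) i) y) + intVec (Pi.single i 1) := by
      rw [intVec, ← map_add]
      congr 1
      funext j
      refine Fin.succAboveCases i ?_ (fun j => ?_) j
      · simp
      · simp
    change F i (L _) = F i (L _)
    rw [hface, hper i]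

lemma pointwise_identity {n : ℕ} {a b : En n → ℝ}
    (ha : ContDiff ℝ (⊤ : ℕ∞) a) (hapos : ∀ x, 0 < a x)
    (hb : ContDiff ℝ (⊤ : ℕ∞) b) (x : En n) :
    dot (gradient b x) (gradient b x) + (b x) ^ 2 * lap a x / a x
      = (a x) ^ 2 * dot (gradient (fun y => b y / a y) x) (gradient (fun y => b y / a y) x)
        + ∑ i, pd i (fun y => b y ^ 2 / a y * pd i a y) x := by
  have hax : a x ≠ 0 := (hapos x).ne'
  have hda := (ha.differentiable (by simp) x).hasFDerivAt
  have hdb := (hb.differentiable (by simp) x).hasFDerivAt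
  have hdi : HasFDerivAt (fun y => (a y)⁻¹) (-(a x ^ 2)⁻¹ • fderiv ℝ a x) x :=
    (hasDerivAt_inv hax).comp_hasFDerivAt x hda
  have hq : ∀ i, pd i (fun y => b y / a y) x = pd i b x / a x - b x * pd i a x / a x ^ 2 := by
    intro i
    simp only [div_eq_mul_inv]
    rw [pd, (hdb.fun_mul hdi).fderiv]
    simp [pd]
    ring
  have hp : ∀ i, pd i (fun y => b y ^ 2 / a y * pd i a y) x
      = 2 * b x * pd i b x * pd i a x / a x - b x ^ 2 * pd i a x ^ 2 / a x ^ 2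
        + b x ^ 2 * pd i (fun y => pd i a y) x / a x := by
    intro i
    have hdp := ((contDiff_pd ha i).differentiable (by simp) x).hasFDerivAt
    simp only [div_eq_mul_inv]
    rw [pd, (((hdb.pow 2).fun_mul hdi).fun_mul hdp).fderiv]
    simp [pd, show pd i a = fun y => fderiv ℝ a y (EuclideanSpace.single i 1) from rfl]
    ring
  simp only [dot, lap, gradient_apply_eq_pd, hq, hp, Finset.mul_sum, Finset.sum_div,
    ← Finset.sum_add_distrib]
  refine Finset.sum_congr rfl fun i _ => ?_
  field_simp
  ring

/-- the integration-by-parts identity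
`∫ (|Db|² + b² Δa / a) dx = ∫ a² |D(b/a)|² dx`. -/
theorem integration_by_parts_identity {n : ℕ}
    (a b : En n → ℝ)
    (ha : ContDiff ℝ (⊤ : ℕ∞) a) (haper : IsPeriodic a) (hapos : ∀ x, 0 < a x)
    (hb : ContDiff ℝ (⊤ : ℕ∞) b) (hbper : IsPeriodic b) :
    (∫ x in unitCube n,
        (dot (gradient b x) (gradient b x) + (b x) ^ 2 * lap a x / a x))
      = ∫ x in unitCube n,
          (a x) ^ 2 * dot (gradient (fun y => b y / a y) x)
                          (gradient (fun y => b y / a y) x) := by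
  have hF : ∀ i, ContDiff ℝ (⊤ : ℕ∞) (fun y => b y ^ 2 / a y * pd i a y) := fun i =>
    ((hb.pow 2).div ha fun x => (hapos x).ne').mul (contDiff_pd ha i)
  have hper : ∀ i, IsPeriodic (fun y => b y ^ 2 / a y * pd i a y) := fun i x k => by
    simp only [hbper x k, haper x k, isPeriodic_pd haper i x k]
  have hq : ContDiff ℝ (⊤ : ℕ∞) (fun y => b y / a y) := hb.div ha fun x => (hapos x).ne'
  simp only [pointwise_identity ha hapos hb]
  -- Both summands are continuous, hence integrable on the compact cube, so the integral splits.
  rw [integral_add, integral_divergence_eq_zero _ hF hper, add_zero]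
  · refine ContinuousOn.integrableOn_compact (isCompact_unitCube n) (Continuous.continuousOn ?_)
    simp only [dot, gradient_apply_eq_pd]
    exact (ha.continuous.pow 2).mul (continuous_finsetSum _ fun i _ =>
      (contDiff_pd hq i).continuous.mul (contDiff_pd hq i).continuous)
  · exact (continuous_finsetSum _ fun i _ =>
      (contDiff_pd (hF i) i).continuous).continuousOn.integrableOn_compact (isCompact_unitCube n)
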